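/- Let C ∈ RH∞^{n×n} be real-rational. Then [P,C] is stable for every strictly negative imaginary (SNI) P ∈ RH∞^{n×n} satisfying P(∞) ≥ 0 if and only if C is negative imaginary (NI) and C(0) ≤ 0 (negative semidefinite). -/

import Mathlib

open Matrix Polynomial Filter Topology
open scoped ComplexOrder

noncomputable section

namespace NIControl

/-- Evaluate a real-rational function at a complex point (junk value at poles). -/
def evalC (f : RatFunc ℝ) (s : ℂ) : ℂ :=
  f.eval (algebraMap ℝ ℂ) s

/-- `s` is a pole of the real-rational function `f`
(the reduced denominator vanishes at `s`). -/
def IsPoleAt (f : RatFunc ℝ) (s : ℂ) : Prop :=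
  f.denom.eval₂ (algebraMap ℝ ℂ) s = 0

variable {n : ℕ}

/-- Pointwise evaluation of a real-rational transfer matrix at a complex point. -/
def evalM (G : Matrix (Fin n) (Fin n) (RatFunc ℝ)) (s : ℂ) : Matrix (Fin n) (Fin n) ℂ :=
  Matrix.of fun i j => evalC (G i j) s

/-- Pointwise evaluation of a real-rational transfer matrix at a real point. -/
def evalR (G : Matrix (Fin n) (Fin n) (RatFunc ℝ)) (x : ℝ) : Matrix (Fin n) (Fin n) ℝ :=
  Matrix.of fun i j => (G i j).eval (RingHom.id ℝ) x

/-- Value at `s = ∞` of a proper real-rational function. -/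
def atInfinity (f : RatFunc ℝ) : ℝ :=
  if f.num.degree = f.denom.degree then f.num.leadingCoeff / f.denom.leadingCoeff else 0

/-- The instantaneous gain `G(∞)` of a proper real-rational transfer matrix. -/
def evalInf (G : Matrix (Fin n) (Fin n) (RatFunc ℝ)) : Matrix (Fin n) (Fin n) ℝ :=
  Matrix.of fun i j => atInfinity (G i j)

/-- The matrix `G` has a pole at `s`. -/
def HasPole (G : Matrix (Fin n) (Fin n) (RatFunc ℝ)) (s : ℂ) : Prop :=
  ∃ i j, IsPoleAt (G i j) s

/-- All entries of `G` are proper rational functions. -/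
def Proper (G : Matrix (Fin n) (Fin n) (RatFunc ℝ)) : Prop :=
  ∀ i j, (G i j).num.degree ≤ (G i j).denom.degree

/-- All entries of `G` are strictly proper rational functions. -/
def StrictlyProper (G : Matrix (Fin n) (Fin n) (RatFunc ℝ)) : Prop :=
  ∀ i j, (G i j).num.degree < (G i j).denom.degree

/-- The pole of `G` at the origin (if any) is at most simple. -/
def NoDoubleOriginPole (G : Matrix (Fin n) (Fin n) (RatFunc ℝ)) : Prop :=
  ∀ i j, (G i j).denom.rootMultiplicity 0 ≤ 1

/-- Membership in `RH∞`: proper and no poles in the closed right-half complex plane. -/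
def MemRHinf {m : Type*} [Fintype m] (G : Matrix m m (RatFunc ℝ)) : Prop :=
  (∀ i j, (G i j).num.degree ≤ (G i j).denom.degree) ∧
  ∀ s : ℂ, 0 ≤ s.re → ∀ i j, ¬ IsPoleAt (G i j) s

/-- The point `jω` on the imaginary axis. -/
def jw (ω : ℝ) : ℂ := Complex.I * (ω : ℂ)

/-- The negative-imaginary frequency kernel `j (M − M*)`. -/
def niKer (M : Matrix (Fin n) (Fin n) ℂ) : Matrix (Fin n) (Fin n) ℂ :=
  Complex.I • (M - Mᴴ)

/-- Negative imaginary (NI) real-rational transfer matrix. -/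
def IsNI (G : Matrix (Fin n) (Fin n) (RatFunc ℝ)) : Prop :=
  Proper G ∧
  (∀ s : ℂ, 0 < s.re → ¬ HasPole G s) ∧
  (∀ ω : ℝ, 0 < ω → ¬ HasPole G (jw ω) → (niKer (evalM G (jw ω))).PosSemidef) ∧
  (∀ ω : ℝ, 0 < ω → HasPole G (jw ω) →
    ∃ R : Matrix (Fin n) (Fin n) ℂ, R.PosSemidef ∧
      Tendsto (fun s : ℂ => (s - jw ω) • Complex.I • evalM G s) (𝓝[≠] jw ω) (𝓝 R)) ∧
  (HasPole G 0 →
    (∀ k : ℕ, 3 ≤ k → Tendsto (fun s : ℂ => s ^ k • evalM G s) (𝓝[≠] 0) (𝓝 0)) ∧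
    ∃ R : Matrix (Fin n) (Fin n) ℂ, R.PosSemidef ∧
      Tendsto (fun s : ℂ => s ^ 2 • evalM G s) (𝓝[≠] 0) (𝓝 R))

/-- Strictly negative imaginary (SNI) real-rational transfer matrix. -/
def IsSNI (G : Matrix (Fin n) (Fin n) (RatFunc ℝ)) : Prop :=
  MemRHinf G ∧ ∀ ω : ℝ, 0 < ω → (niKer (evalM G (jw ω))).PosDef

/-- Positive real (passive) real-rational transfer matrix. -/
def IsPositiveReal (G : Matrix (Fin n) (Fin n) (RatFunc ℝ)) : Prop :=
  MemRHinf G ∧ ∀ ω : ℝ, 0 ≤ ω → (evalM G (jw ω) + (evalM G (jw ω))ᴴ).PosSemidef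

/-- Output strictly passive real-rational transfer matrix. -/
def IsOSP (G : Matrix (Fin n) (Fin n) (RatFunc ℝ)) : Prop :=
  MemRHinf G ∧ ∃ ε : ℝ, 0 < ε ∧ ∀ ω : ℝ, 0 ≤ ω →
    (evalM G (jw ω) + (evalM G (jw ω))ᴴ -
      (ε : ℂ) • ((evalM G (jw ω))ᴴ * evalM G (jw ω))).PosSemidef

/-- Stability of the positive feedback interconnection `[P, C]`:
`[I; C] (I − P C)⁻¹ [I, P] ∈ RH∞`. -/
def FeedbackStable (P C : Matrix (Fin n) (Fin n) (RatFunc ℝ)) : Prop :=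
  ((1 : Matrix (Fin n) (Fin n) (RatFunc ℝ)) - P * C).det ≠ 0 ∧
  MemRHinf (Matrix.fromBlocks
    (1 - P * C)⁻¹ ((1 - P * C)⁻¹ * P)
    (C * (1 - P * C)⁻¹) (C * (1 - P * C)⁻¹ * P))

/-- All eigenvalues of the complex matrix `M` are real and less than `c`. -/
def eigsRealAndLT (M : Matrix (Fin n) (Fin n) ℂ) (c : ℝ) : Prop :=
  ∀ μ ∈ spectrum ℂ M, μ.im = 0 ∧ μ.re < c

/-- The (real) eigenvalues of the real matrix `M` are all real and its largest
eigenvalue is less than `c`. -/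
def maxEigLT (M : Matrix (Fin n) (Fin n) ℝ) (c : ℝ) : Prop :=
  eigsRealAndLT (M.map (Complex.ofReal)) c

/-- Loewner order `A ≤ B` on real matrices. -/
def LoewnerLE (A B : Matrix (Fin n) (Fin n) ℝ) : Prop := (B - A).PosSemidef

/-- Strict Loewner order `A < B` on real matrices. -/
def LoewnerLT (A B : Matrix (Fin n) (Fin n) ℝ) : Prop := (B - A).PosDef

/-! ### Algebra of stable proper rational functions -/

lemma deg_iff (f : RatFunc ℝ) : f.num.degree ≤ f.denom.degree ↔ f.intDegree ≤ 0 := by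
  have hd : f.denom ≠ 0 := f.denom_ne_zero
  rw [RatFunc.intDegree, Polynomial.degree_eq_natDegree hd, ← Polynomial.natDegree_le_iff_degree_le]
  omega

/-- Scalar membership in `RH∞`. -/
def Good (f : RatFunc ℝ) : Prop :=
  f.intDegree ≤ 0 ∧ ∀ s : ℂ, 0 ≤ s.re → f.denom.eval₂ (algebraMap ℝ ℂ) s ≠ 0

lemma eval₂_ne_of_dvd {p q : ℝ[X]} {s : ℂ} (h : p ∣ q) (hq : q.eval₂ (algebraMap ℝ ℂ) s ≠ 0) :
    p.eval₂ (algebraMap ℝ ℂ) s ≠ 0 := by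
  obtain ⟨r, rfl⟩ := h
  rw [Polynomial.eval₂_mul] at hq
  exact left_ne_zero_of_mul hq

lemma Good.add {f g : RatFunc ℝ} (hf : Good f) (hg : Good g) : Good (f + g) := by
  refine ⟨?_, fun s hs => ?_⟩
  · by_cases h : g = 0
    · simpa [h] using hf.1
    by_cases h' : f + g = 0
    · simp [h']
    · exact (RatFunc.intDegree_add_le h h').trans (max_le hf.1 hg.1)
  · refine eval₂_ne_of_dvd (RatFunc.denom_add_dvd f g) ?_
    rw [Polynomial.eval₂_mul]
    exact mul_ne_zero (hf.2 s hs) (hg.2 s hs)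

lemma Good.mul {f g : RatFunc ℝ} (hf : Good f) (hg : Good g) : Good (f * g) := by
  refine ⟨?_, fun s hs => ?_⟩
  · by_cases h : f = 0
    · simp [h]
    by_cases h' : g = 0
    · simp [h']
    · rw [RatFunc.intDegree_mul h h']
      linarith [hf.1, hg.1]
  · refine eval₂_ne_of_dvd (RatFunc.denom_mul_dvd f g) ?_
    rw [Polynomial.eval₂_mul]
    exact mul_ne_zero (hf.2 s hs) (hg.2 s hs)

lemma good_C (r : ℝ) : Good (RatFunc.C r) := by
  refine ⟨by simp, fun s hs => by simp⟩

lemma Good.neg {f : RatFunc ℝ} (hf : Good f) : Good (-f) := by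
  have := (good_C (-1)).mul hf
  simpa using this

/-- The ring of stable proper real-rational functions. -/
def RH : Subring (RatFunc ℝ) where
  carrier := {f | Good f}
  mul_mem' := Good.mul
  add_mem' := Good.add
  neg_mem' := Good.neg
  one_mem' := by simpa using good_C 1
  zero_mem' := by simpa using good_C 0

lemma mem_RH {f : RatFunc ℝ} : f ∈ RH ↔ Good f := Iff.rfl

lemma memRHinf_iff {m : Type*} [Fintype m] (G : Matrix m m (RatFunc ℝ)) :
    MemRHinf G ↔ ∀ i j, G i j ∈ RH := by
  simp only [MemRHinf, mem_RH, Good, deg_iff, IsPoleAt]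
  constructor
  · intro h i j
    exact ⟨h.1 i j, fun s hs => h.2 s hs i j⟩
  · intro h
    exact ⟨fun i j => (h i j).1, fun s hs i j => (h i j).2 s hs⟩

/-- Evaluation at a point of the closed right-half plane, as a ring homomorphism. -/
def evH (s : ℂ) (hs : 0 ≤ s.re) : RH →+* ℂ where
  toFun f := evalC f.1 s
  map_one' := by simp [evalC]
  map_zero' := by simp [evalC]
  map_add' f g := RatFunc.eval_add _ _ (f.2.2 s hs) (g.2.2 s hs)
  map_mul' f g := RatFunc.eval_mul _ _ (f.2.2 s hs) (g.2.2 s hs)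

lemma evalC_ofReal (f : RatFunc ℝ) (x : ℝ) :
    evalC f (x : ℂ) = ((f.eval (RingHom.id ℝ) x : ℝ) : ℂ) := by
  simp only [evalC, RatFunc.eval, Complex.ofReal_div]
  have h : ∀ p : ℝ[X], p.eval₂ (algebraMap ℝ ℂ) (x : ℂ) = ((p.eval₂ (RingHom.id ℝ) x : ℝ) : ℂ) := by
    intro p
    have := Polynomial.hom_eval₂ p (RingHom.id ℝ) (algebraMap ℝ ℂ) x
    simpa using this.symm
  rw [h, h]

lemma evalC_conj (f : RatFunc ℝ) (s : ℂ) :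
    evalC f (starRingEnd ℂ s) = starRingEnd ℂ (evalC f s) := by
  simp only [evalC, RatFunc.eval, map_div₀]
  have h : ∀ p : ℝ[X], p.eval₂ (algebraMap ℝ ℂ) (starRingEnd ℂ s)
      = starRingEnd ℂ (p.eval₂ (algebraMap ℝ ℂ) s) := by
    intro p
    rw [Polynomial.hom_eval₂]
    congr 1
    ext r
    simp
  rw [h, h]

lemma atInf_tendsto {f : RatFunc ℝ} (hf : f.intDegree ≤ 0) :
    Tendsto (fun x : ℝ => f.eval (RingHom.id ℝ) x) atTop (𝓝 (atInfinity f)) := by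
  rw [← deg_iff] at hf
  simp only [RatFunc.eval, atInfinity]
  split_ifs with h
  · exact Polynomial.div_tendsto_atTop_leadingCoeff_div_of_degree_eq _ _ h
  · exact Polynomial.div_tendsto_atTop_zero_of_degree_lt _ _ (lt_of_le_of_ne hf h)

lemma evalR_add {f g : RatFunc ℝ} (hf : Good f) (hg : Good g) {x : ℝ} (hx : 0 ≤ x) :
    (f + g).eval (RingHom.id ℝ) x = f.eval (RingHom.id ℝ) x + g.eval (RingHom.id ℝ) x := by
  have := map_add (evH x (by simpa using hx)) ⟨f, hf⟩ ⟨g, hg⟩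
  simp only [evH, RingHom.coe_mk, MonoidHom.coe_mk, OneHom.coe_mk, Subring.coe_add,
    evalC_ofReal] at this
  exact_mod_cast this

lemma evalR_mul {f g : RatFunc ℝ} (hf : Good f) (hg : Good g) {x : ℝ} (hx : 0 ≤ x) :
    (f * g).eval (RingHom.id ℝ) x = f.eval (RingHom.id ℝ) x * g.eval (RingHom.id ℝ) x := by
  have := map_mul (evH x (by simpa using hx)) ⟨f, hf⟩ ⟨g, hg⟩
  simp only [evH, RingHom.coe_mk, MonoidHom.coe_mk, OneHom.coe_mk, Subring.coe_mul,
    evalC_ofReal] at this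
  exact_mod_cast this

/-- The value at infinity as a ring homomorphism. -/
def infH : RH →+* ℝ where
  toFun f := atInfinity f.1
  map_one' := by simp [atInfinity]
  map_zero' := by simp [atInfinity]
  map_add' f g := by
    refine tendsto_nhds_unique (atInf_tendsto (f + g).2.1) ?_
    refine ((atInf_tendsto f.2.1).add (atInf_tendsto g.2.1)).congr' ?_
    filter_upwards [eventually_ge_atTop 0] with x hx
    exact (evalR_add f.2 g.2 hx).symm
  map_mul' f g := by
    refine tendsto_nhds_unique (atInf_tendsto (f * g).2.1) ?_
    refine ((atInf_tendsto f.2.1).mul (atInf_tendsto g.2.1)).congr' ?_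
    filter_upwards [eventually_ge_atTop 0] with x hx
    exact (evalR_mul f.2 g.2 hx).symm

/-- Real evaluation at zero as a ring homomorphism. -/
def zeroH : RH →+* ℝ where
  toFun f := f.1.eval (RingHom.id ℝ) 0
  map_one' := by simp
  map_zero' := by simp
  map_add' f g := evalR_add f.2 g.2 le_rfl
  map_mul' f g := evalR_mul f.2 g.2 le_rfl

lemma RH_isUnit (f : RH) (h : ∀ s : ℂ, 0 ≤ s.re → evalC f.1 s ≠ 0) (hi : atInfinity f.1 ≠ 0) :
    IsUnit f := by
  have hf0 : f.1 ≠ 0 := by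
    intro h0
    exact h 0 (by simp) (by simp [h0, evalC])
  have hg : Good (f.1⁻¹) := by
    refine ⟨?_, fun s hs => ?_⟩
    · rw [RatFunc.intDegree_inv]
      have : f.1.num.degree = f.1.denom.degree := by
        by_contra hne
        exact hi (by simp [atInfinity, hne])
      have := Polynomial.natDegree_eq_of_degree_eq this
      simp [RatFunc.intDegree, this]
    · refine eval₂_ne_of_dvd (RatFunc.denom_inv_dvd hf0) ?_
      intro h0
      exact h s hs (by simp [evalC, RatFunc.eval, h0])
  refine IsUnit.of_mul_eq_one ⟨f.1⁻¹, hg⟩ ?_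
  ext
  simp [hf0]

/-- Lift a stable matrix to the ring `RH`. -/
lemma exists_lift {G : Matrix (Fin n) (Fin n) (RatFunc ℝ)} (h : MemRHinf G) :
    ∃ G' : Matrix (Fin n) (Fin n) RH, G = RH.subtype.mapMatrix G' := by
  rw [memRHinf_iff] at h
  exact ⟨Matrix.of fun i j => ⟨G i j, h i j⟩, by ext i j; simp⟩

lemma memRHinf_map (G' : Matrix (Fin n) (Fin n) RH) : MemRHinf (RH.subtype.mapMatrix G') := by
  rw [memRHinf_iff]
  intro i j
  exact (G' i j).2

lemma evalM_map (G' : Matrix (Fin n) (Fin n) RH) (s : ℂ) (hs : 0 ≤ s.re) :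
    evalM (RH.subtype.mapMatrix G') s = (evH s hs).mapMatrix G' := by
  ext i j; rfl

lemma evalInf_map (G' : Matrix (Fin n) (Fin n) RH) :
    evalInf (RH.subtype.mapMatrix G') = infH.mapMatrix G' := by
  ext i j; rfl

lemma evalR_map (G' : Matrix (Fin n) (Fin n) RH) :
    evalR (RH.subtype.mapMatrix G') 0 = zeroH.mapMatrix G' := by
  ext i j; rfl

lemma feedbackStable_of {P C : Matrix (Fin n) (Fin n) (RatFunc ℝ)} (hP : MemRHinf P)
    (hC : MemRHinf C)
    (h : ∀ s : ℂ, 0 ≤ s.re → (1 - evalM P s * evalM C s).det ≠ 0)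
    (hi : (1 - evalInf P * evalInf C).det ≠ 0) : FeedbackStable P C := by
  obtain ⟨P, rfl⟩ := exists_lift hP
  obtain ⟨C, rfl⟩ := exists_lift hC
  have hu : IsUnit (1 - P * C).det := by
    apply RH_isUnit
    · intro s hs
      have := h s hs
      rw [evalM_map _ s hs, evalM_map _ s hs, ← map_mul, ← map_one (evH s hs).mapMatrix, ← map_sub,
        ← RingHom.map_det] at this
      exact this
    · rw [evalInf_map, evalInf_map, ← map_mul, ← map_one infH.mapMatrix, ← map_sub,
        ← RingHom.map_det] at hi
      exact hi
  have e : (1 : Matrix (Fin n) (Fin n) (RatFunc ℝ)) - RH.subtype.mapMatrix P * RH.subtype.mapMatrix C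
      = RH.subtype.mapMatrix (1 - P * C) := by
    rw [map_sub, map_one, map_mul]
  have e' : (1 - RH.subtype.mapMatrix P * RH.subtype.mapMatrix C)⁻¹
      = RH.subtype.mapMatrix (1 - P * C)⁻¹ := by
    apply Matrix.inv_eq_right_inv
    rw [e, ← map_mul, Matrix.mul_nonsing_inv _ hu, map_one]
  refine ⟨?_, ?_⟩
  · rw [e, ← RingHom.map_det]
    exact (hu.map RH.subtype).ne_zero
  · rw [e', ← map_mul, ← map_mul, ← map_mul, memRHinf_iff]
    rintro (i | i) (j | j)
    · exact ((1 - P * C)⁻¹ i j).2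
    · exact (((1 - P * C)⁻¹ * P) i j).2
    · exact ((C * (1 - P * C)⁻¹) i j).2
    · exact ((C * (1 - P * C)⁻¹ * P) i j).2

lemma det_ne_of_stable {P C : Matrix (Fin n) (Fin n) (RatFunc ℝ)} (hP : MemRHinf P)
    (hC : MemRHinf C) (hs : FeedbackStable P C) (s : ℂ) (h0 : 0 ≤ s.re) :
    (1 - evalM P s * evalM C s).det ≠ 0 := by
  obtain ⟨P, rfl⟩ := exists_lift hP
  obtain ⟨C, rfl⟩ := exists_lift hC
  obtain ⟨hd, hm⟩ := hs
  rw [memRHinf_iff] at hm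
  have hK : MemRHinf (1 - RH.subtype.mapMatrix P * RH.subtype.mapMatrix C)⁻¹ := by
    rw [memRHinf_iff]
    intro i j
    exact hm (Sum.inl i) (Sum.inl j)
  obtain ⟨K, hK⟩ := exists_lift hK
  have h1 := Matrix.mul_nonsing_inv (1 - RH.subtype.mapMatrix P * RH.subtype.mapMatrix C)
    (isUnit_iff_ne_zero.mpr hd)
  have h2 : (1 - P * C) * K = 1 := by
    have hinj : Function.Injective (RH.subtype.mapMatrix : Matrix (Fin n) (Fin n) RH → _) := by
      intro A B hAB
      ext i j
      exact congrFun (congrFun hAB i) j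
    apply hinj
    rw [hK] at h1
    rw [map_mul, map_sub, map_one, map_mul]
    exact h1
  have h3 := congrArg (evH s h0).mapMatrix h2
  rw [map_mul, map_one, map_sub, map_one, map_mul, ← evalM_map, ← evalM_map] at h3
  have h4 := congrArg Matrix.det h3
  rw [Matrix.det_mul, Matrix.det_one] at h4
  exact left_ne_zero_of_mul (h4 ▸ one_ne_zero)

/-! ### Positive-real lemma in the right half-plane -/

lemma pr_lemma {g : ℂ → ℂ} {K : ℝ} (hd : ∀ s : ℂ, 0 ≤ s.re → DifferentiableAt ℂ g s)
    (hb : ∀ s : ℂ, 0 ≤ s.re → ‖g s‖ ≤ K)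
    (hsgn : ∀ ω : ℝ, ω ≠ 0 → 0 ≤ ((g (jw ω) - g 0) / jw ω).re) (s : ℂ) (hs : 0 < s.re) :
    0 ≤ ((g s - g 0) / s).re ∧
      (((g s - g 0) / s).re = 0 → ∀ ω : ℝ, ω ≠ 0 → ((g (jw ω) - g 0) / jw ω).re = 0) := by
  have hk : ∀ z : ℂ, z ≠ 0 → dslope g 0 z = (g z - g 0) / z := by
    intro z hz
    rw [dslope_of_ne _ hz, slope_def_field, sub_zero]
  set k := dslope g 0 with hkdef
  have hcont : ∀ z : ℂ, 0 ≤ z.re → ContinuousAt k z := by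
    intro z hz
    by_cases h0 : z = 0
    · subst h0
      exact continuousAt_dslope_same.mpr (hd 0 (by simp))
    · exact (continuousAt_dslope_of_ne h0).mpr (hd z hz).continuousAt
  have hdiff : ∀ z : ℂ, 0 < z.re → DifferentiableAt ℂ k z := by
    intro z hz
    have h0 : z ≠ 0 := by rintro rfl; simp at hz
    exact (differentiableAt_dslope_of_ne h0).mpr (hd z hz.le)
  -- bound on k
  have hbk : ∃ B : ℝ, ∀ z : ℂ, 0 ≤ z.re → ‖k z‖ ≤ B := by
    have hcpt : IsCompact (Metric.closedBall (0:ℂ) 1 ∩ {z : ℂ | 0 ≤ z.re}) :=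
      (isCompact_closedBall _ _).inter_right (isClosed_le continuous_const Complex.continuous_re)
    obtain ⟨B, hB⟩ := hcpt.exists_bound_of_continuousOn (f := k)
      (fun z hz => (hcont z hz.2).continuousWithinAt)
    refine ⟨max B (K + K), fun z hz => ?_⟩
    by_cases h1 : ‖z‖ ≤ 1
    · exact (hB z ⟨by simpa using h1, hz⟩).trans (le_max_left _ _)
    · push Not at h1
      have h0 : z ≠ 0 := by rintro rfl; simp at h1; linarith
      rw [hk z h0, norm_div]
      refine le_trans ?_ (le_max_right _ _)
      have h2 : ‖g z - g 0‖ ≤ K + K :=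
        (norm_sub_le _ _).trans (add_le_add (hb z hz) (hb 0 (by simp)))
      rw [div_le_iff₀ (by linarith)]
      nlinarith [norm_nonneg (g z - g 0)]
  obtain ⟨B, hB⟩ := hbk
  let E : ℂ → ℂ := fun z => Complex.exp (-(k z))
  have hEn : ∀ z, ‖E z‖ = Real.exp (-(k z).re) := by
    intro z; simp [E, Complex.norm_exp]
  have hEb : ∀ z : ℂ, 0 ≤ z.re → ‖E z‖ ≤ Real.exp B := by
    intro z hz
    rw [hEn]
    apply Real.exp_le_exp.mpr
    have := (abs_le.mp ((Complex.abs_re_le_norm (k z)).trans (hB z hz))).1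
    linarith
  have hcl : closure {z : ℂ | 0 < z.re} = {z : ℂ | 0 ≤ z.re} := Complex.closure_setOfPred_lt_re 0
  have hEd : DiffContOnCl ℂ E {z : ℂ | 0 < z.re} := by
    constructor
    · intro z hz
      exact ((hdiff z hz).neg.cexp).differentiableWithinAt
    · rw [hcl]
      intro z hz
      exact ((hcont z hz).neg.cexp).continuousWithinAt
  have haxis : ∀ ω : ℝ, 0 ≤ (k (jw ω)).re := by
    have hne : ∀ ω : ℝ, ω ≠ 0 → 0 ≤ (k (jw ω)).re := by
      intro ω hω
      rw [hk _ (by simp [jw, hω])]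
      exact hsgn ω hω
    intro ω
    by_cases hω : ω = 0
    · subst hω
      have hc : ContinuousAt (fun ω : ℝ => (k (jw ω)).re) 0 := by
        have h1 : ContinuousAt k (jw 0) := hcont _ (by simp [jw])
        have h2 : ContinuousAt jw 0 := by unfold jw; fun_prop
        exact Complex.continuous_re.continuousAt.comp (ContinuousAt.comp (f := jw) h1 h2)
      have ht : Tendsto (fun ω : ℝ => (k (jw ω)).re) (𝓝[≠] 0) (𝓝 (k (jw 0)).re) :=
        hc.tendsto.mono_left nhdsWithin_le_nhds
      refine ge_of_tendsto ht ?_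
      filter_upwards [self_mem_nhdsWithin] with x hx
      exact hne x hx
    · exact hne ω hω
  have hE1 : ∀ z : ℂ, 0 ≤ z.re → ‖E z‖ ≤ 1 := by
    intro z hz
    refine PhragmenLindelof.right_half_plane_of_bounded_on_real hEd ?_ ?_ ?_ hz
    · refine ⟨0, by norm_num, 0, ?_⟩
      refine Asymptotics.IsBigO.of_bound (Real.exp B) ?_
      refine eventually_inf_principal.mpr (Eventually.of_forall fun z hz => ?_)
      simpa using hEb z (le_of_lt hz)
    · refine ⟨Real.exp B, ?_⟩
      rw [eventually_map]
      filter_upwards [eventually_ge_atTop 0] with x hx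
      exact hEb x (by simpa using hx)
    · intro x
      rw [hEn, Real.exp_le_one_iff]
      have := haxis x
      rw [jw, mul_comm] at this
      linarith
  have hre : ∀ z : ℂ, 0 ≤ z.re → 0 ≤ (k z).re := by
    intro z hz
    have := hE1 z hz
    rw [hEn, Real.exp_le_one_iff] at this
    linarith
  have hs0 : s ≠ 0 := by rintro rfl; simp at hs
  rw [← hk s hs0]
  refine ⟨hre s hs.le, fun h0 ω hω => ?_⟩
  have hmax : IsMaxOn (norm ∘ E) {z : ℂ | 0 < z.re} s := by
    intro z hz
    have h1 : ‖E s‖ = 1 := by rw [hEn, h0]; simp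
    simp only [Set.mem_ofPred_eq, Function.comp, h1]
    exact hE1 z (le_of_lt hz)
  have hopen : IsOpen {z : ℂ | 0 < z.re} := isOpen_lt continuous_const Complex.continuous_re
  have hconv : Convex ℝ {z : ℂ | 0 < z.re} := convex_halfSpace_re_gt 0
  have heq := Complex.eqOn_of_isPreconnected_of_isMaxOn_norm hconv.isPreconnected hopen
    hEd.differentiableOn hs hmax
  have heq2 : Set.EqOn E (Function.const ℂ (E s)) (closure {z : ℂ | 0 < z.re}) :=
    heq.of_subset_closure hEd.continuousOn continuousOn_const subset_closure (le_refl _)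
  have hj : E (jw ω) = E s := heq2 (by rw [hcl]; simp [jw])
  have h2 : ‖E (jw ω)‖ = 1 := by rw [hj, hEn, h0]; simp
  rw [hEn, Real.exp_eq_one_iff] at h2
  rw [← hk _ (by simp [jw, hω])]
  linarith

/-- The function `w ↦ f(1/w)` extended analytically to `w = 0`. -/
def dualC (f : RatFunc ℝ) (w : ℂ) : ℂ :=
  (Polynomial.reflect f.denom.natDegree f.num).eval₂ (algebraMap ℝ ℂ) w /
    (Polynomial.reflect f.denom.natDegree f.denom).eval₂ (algebraMap ℝ ℂ) w

lemma reflect_eval {p : ℝ[X]} {N : ℕ} (h : p.natDegree ≤ N) {w : ℂ} (hw : w ≠ 0) :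
    (Polynomial.reflect N p).eval₂ (algebraMap ℝ ℂ) w
      = w ^ N * p.eval₂ (algebraMap ℝ ℂ) w⁻¹ := by
  have : Invertible (w⁻¹) := invertibleOfNonzero (inv_ne_zero hw)
  have := Polynomial.eval₂_reflect_mul_pow (algebraMap ℝ ℂ) w⁻¹ N p h
  rw [invOf_eq_inv, inv_inv] at this
  rw [← this, inv_pow, mul_comm, mul_assoc, inv_mul_cancel₀ (pow_ne_zero _ hw), mul_one]

lemma dualC_eq (f : RatFunc ℝ) (hf : f.intDegree ≤ 0) {w : ℂ} (hw : w ≠ 0) :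
    dualC f w = evalC f w⁻¹ := by
  have h : f.num.natDegree ≤ f.denom.natDegree := by
    simp only [RatFunc.intDegree] at hf; omega
  rw [dualC, reflect_eval h hw, reflect_eval le_rfl hw, evalC, RatFunc.eval,
    mul_div_mul_left _ _ (pow_ne_zero _ hw)]

lemma re_inv_nonneg {w : ℂ} (hw : 0 ≤ w.re) : 0 ≤ (w⁻¹).re := by
  rw [Complex.inv_re]
  exact div_nonneg hw (Complex.normSq_nonneg _)

lemma dualC_diff (f : RatFunc ℝ) (hf : Good f) (w : ℂ) (hw : 0 ≤ w.re) :
    DifferentiableAt ℂ (dualC f) w := by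
  have hdp : ∀ p : ℝ[X], DifferentiableAt ℂ (fun z => p.eval₂ (algebraMap ℝ ℂ) z) w := by
    intro p
    simp only [Polynomial.eval₂_eq_eval_map]
    exact Polynomial.differentiableAt _
  refine (hdp _).div (hdp _) ?_
  by_cases h0 : w = 0
  · subst h0
    rw [Polynomial.eval₂_at_zero, Polynomial.coeff_reflect, Polynomial.revAt_zero]
    simp [f.denom_ne_zero]
  · rw [reflect_eval le_rfl h0]
    exact mul_ne_zero (pow_ne_zero _ h0) (hf.2 _ (re_inv_nonneg hw))

lemma evalC_diff (f : RatFunc ℝ) (hf : Good f) (w : ℂ) (hw : 0 ≤ w.re) :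
    DifferentiableAt ℂ (evalC f) w := by
  have hdp : ∀ p : ℝ[X], DifferentiableAt ℂ (fun z => p.eval₂ (algebraMap ℝ ℂ) z) w := by
    intro p
    simp only [Polynomial.eval₂_eq_eval_map]
    exact Polynomial.differentiableAt _
  exact (hdp _).div (hdp _) (hf.2 w hw)

lemma dualC_zero (f : RatFunc ℝ) (hf : Good f) : dualC f 0 = (atInfinity f : ℂ) := by
  have h1 : Tendsto (fun x : ℝ => dualC f ((x⁻¹ : ℝ) : ℂ)) atTop (𝓝 (dualC f 0)) := by
    have hc : ContinuousAt (dualC f) ((0 : ℝ) : ℂ) := (dualC_diff f hf _ (by simp)).continuousAt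
    have h := hc.tendsto.comp ((Complex.continuous_ofReal.tendsto 0).comp tendsto_inv_atTop_zero)
    simpa [Function.comp_def] using h
  have h2 : Tendsto (fun x : ℝ => dualC f ((x⁻¹ : ℝ) : ℂ)) atTop (𝓝 (atInfinity f : ℂ)) := by
    have h := (Complex.continuous_ofReal.tendsto _).comp (atInf_tendsto hf.1)
    refine h.congr' ?_
    filter_upwards [eventually_gt_atTop 0] with x hx
    have hx0 : ((x⁻¹ : ℝ) : ℂ) ≠ 0 := by simp [hx.ne']
    rw [dualC_eq f hf.1 hx0, ← Complex.ofReal_inv, inv_inv, evalC_ofReal]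
    rfl
  exact tendsto_nhds_unique h1 h2

lemma exists_bound (f : RatFunc ℝ) (hf : Good f) :
    ∃ K : ℝ, ∀ s : ℂ, 0 ≤ s.re → ‖evalC f s‖ ≤ K ∧ ‖dualC f s‖ ≤ K := by
  have hcpt : IsCompact (Metric.closedBall (0:ℂ) 1 ∩ {z : ℂ | 0 ≤ z.re}) :=
    (isCompact_closedBall _ _).inter_right (isClosed_le continuous_const Complex.continuous_re)
  obtain ⟨A, hA⟩ := hcpt.exists_bound_of_continuousOn (f := evalC f)
    (fun z hz => (evalC_diff f hf z hz.2).continuousAt.continuousWithinAt)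
  obtain ⟨B, hB⟩ := hcpt.exists_bound_of_continuousOn (f := dualC f)
    (fun z hz => (dualC_diff f hf z hz.2).continuousAt.continuousWithinAt)
  refine ⟨max A B, fun s hs => ?_⟩
  by_cases h1 : ‖s‖ ≤ 1
  · have hA1 := hA s ⟨by simpa using h1, hs⟩
    have hB1 := hB s ⟨by simpa using h1, hs⟩
    exact ⟨hA1.trans (le_max_left _ _), hB1.trans (le_max_right _ _)⟩
  · push Not at h1
    have h0 : s ≠ 0 := by rintro rfl; simp at h1; linarith
    have hinv : ‖s⁻¹‖ ≤ 1 := by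
      rw [norm_inv]
      exact inv_le_one_of_one_le₀ h1.le
    have hA1 := hA s⁻¹ ⟨by simpa using hinv, re_inv_nonneg hs⟩
    have hB1 := hB s⁻¹ ⟨by simpa using hinv, re_inv_nonneg hs⟩
    rw [dualC_eq f hf.1 (inv_ne_zero h0), inv_inv] at hB1
    rw [dualC_eq f hf.1 h0]
    exact ⟨hB1.trans (le_max_right _ _), hA1.trans (le_max_left _ _)⟩

/-! ### Quadratic forms -/

/-- The sesquilinear form `x* M x`. -/
def qf (M : Matrix (Fin n) (Fin n) ℂ) (x : Fin n → ℂ) : ℂ := star x ⬝ᵥ M *ᵥ x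

lemma qf_eq_sum (M : Matrix (Fin n) (Fin n) ℂ) (x : Fin n → ℂ) :
    qf M x = ∑ i, ∑ j, star (x i) * (M i j * x j) := by
  simp [qf, dotProduct, mulVec, Finset.mul_sum]

lemma qf_conjTranspose (M : Matrix (Fin n) (Fin n) ℂ) (x : Fin n → ℂ) :
    qf Mᴴ x = star (qf M x) := by
  rw [qf, qf, Matrix.star_dotProduct, star_mulVec, conjTranspose_conjTranspose,
    ← Matrix.dotProduct_mulVec]

lemma qf_niKer (M : Matrix (Fin n) (Fin n) ℂ) (x : Fin n → ℂ) :
    qf (niKer M) x = ((-2 * (qf M x).im : ℝ) : ℂ) := by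
  have : qf (niKer M) x = Complex.I * (qf M x - qf Mᴴ x) := by
    simp only [qf, niKer, smul_mulVec, sub_mulVec, dotProduct_smul, dotProduct_sub, smul_eq_mul]
  rw [this, qf_conjTranspose]
  apply Complex.ext
  · simp; ring
  · simp

lemma niKer_herm (M : Matrix (Fin n) (Fin n) ℂ) : (niKer M).IsHermitian := by
  rw [Matrix.IsHermitian, niKer, conjTranspose_smul, conjTranspose_sub, conjTranspose_conjTranspose]
  rw [Complex.star_def, Complex.conj_I, neg_smul, ← smul_neg, neg_sub]

lemma niKer_psd_iff (M : Matrix (Fin n) (Fin n) ℂ) :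
    (niKer M).PosSemidef ↔ ∀ x, (qf M x).im ≤ 0 := by
  rw [posSemidef_iff_dotProduct_mulVec]
  constructor
  · intro h x
    have := h.2 x
    rw [← qf, qf_niKer, Complex.zero_le_real] at this
    linarith
  · intro h
    refine ⟨niKer_herm M, fun x => ?_⟩
    rw [← qf, qf_niKer, Complex.zero_le_real]
    linarith [h x]

lemma niKer_pd_iff (M : Matrix (Fin n) (Fin n) ℂ) :
    (niKer M).PosDef ↔ ∀ x, x ≠ 0 → (qf M x).im < 0 := by
  rw [posDef_iff_dotProduct_mulVec]
  constructor
  · intro h x hx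
    have := h.2 hx
    rw [← qf, qf_niKer, Complex.zero_lt_real] at this
    linarith
  · intro h
    refine ⟨niKer_herm M, fun x hx => ?_⟩
    rw [← qf, qf_niKer, Complex.zero_lt_real]
    linarith [h x hx]

lemma qf_conj (G : Matrix (Fin n) (Fin n) (RatFunc ℝ)) (s : ℂ) (x : Fin n → ℂ) :
    qf (evalM G (starRingEnd ℂ s)) x = star (qf (evalM G s) (star x)) := by
  simp only [qf_eq_sum, evalM, of_apply, evalC_conj, star_sum, star_mul', Pi.star_apply, star_star]
  rfl

lemma jw_neg (ω : ℝ) : jw (-ω) = starRingEnd ℂ (jw ω) := by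
  simp [jw]

lemma jw_re (ω : ℝ) : (jw ω).re = 0 := by simp [jw]

lemma im_nonpos_all {G : Matrix (Fin n) (Fin n) (RatFunc ℝ)}
    (h : ∀ ω : ℝ, 0 < ω → ∀ x, (qf (evalM G (jw ω)) x).im ≤ 0) (ω : ℝ) (hω : ω ≠ 0)
    (x : Fin n → ℂ) : ω * (qf (evalM G (jw ω)) x).im ≤ 0 := by
  rcases lt_or_gt_of_ne hω with h1 | h1
  · have h2 := h (-ω) (by linarith) (star x)
    have h3 := qf_conj G (jw (-ω)) x
    rw [← jw_neg, neg_neg] at h3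
    rw [h3, Complex.star_def, Complex.conj_im]
    nlinarith
  · have := h ω h1 x
    nlinarith

lemma im_neg_all {G : Matrix (Fin n) (Fin n) (RatFunc ℝ)}
    (h : ∀ ω : ℝ, 0 < ω → ∀ x, x ≠ 0 → (qf (evalM G (jw ω)) x).im < 0) (ω : ℝ) (hω : ω ≠ 0)
    (x : Fin n → ℂ) (hx : x ≠ 0) : ω * (qf (evalM G (jw ω)) x).im < 0 := by
  rcases lt_or_gt_of_ne hω with h1 | h1
  · have h2 := h (-ω) (by linarith) (star x) (by simpa using hx)
    have h3 := qf_conj G (jw (-ω)) x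
    rw [← jw_neg, neg_neg] at h3
    rw [h3, Complex.star_def, Complex.conj_im]
    nlinarith
  · have := h ω h1 x hx
    nlinarith

lemma qf_diff (F : Fin n → Fin n → ℂ → ℂ) (x : Fin n → ℂ) (s : ℂ)
    (h : ∀ i j, DifferentiableAt ℂ (F i j) s) :
    DifferentiableAt ℂ (fun s => qf (Matrix.of fun i j => F i j s) x) s := by
  simp only [qf_eq_sum, of_apply]
  refine DifferentiableAt.fun_sum fun i _ => DifferentiableAt.fun_sum fun j _ => ?_
  exact ((h i j).mul_const _).const_mul _

lemma qf_bound (F : Fin n → Fin n → ℂ → ℂ) (x : Fin n → ℂ)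
    (h : ∀ i j, ∃ K : ℝ, ∀ s : ℂ, 0 ≤ s.re → ‖F i j s‖ ≤ K) :
    ∃ K : ℝ, ∀ s : ℂ, 0 ≤ s.re → ‖qf (Matrix.of fun i j => F i j s) x‖ ≤ K := by
  choose K hK using h
  refine ⟨∑ i, ∑ j, ‖star (x i)‖ * (K i j * ‖x j‖), fun s hs => ?_⟩
  simp only [qf_eq_sum, of_apply]
  refine (norm_sum_le _ _).trans (Finset.sum_le_sum fun i _ => ?_)
  refine (norm_sum_le _ _).trans (Finset.sum_le_sum fun j _ => ?_)
  rw [norm_mul, norm_mul]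
  have := hK i j s hs
  gcongr

open scoped MatrixOrder in
lemma psd_map {A : Matrix (Fin n) (Fin n) ℝ} (hA : A.PosSemidef) :
    (A.map (fun r : ℝ => (r : ℂ))).PosSemidef := by
  obtain ⟨B, hB⟩ := CStarAlgebra.nonneg_iff_eq_star_mul_self.mp hA.nonneg
  have : A.map (fun r : ℝ => (r : ℂ)) = (B.map (fun r : ℝ => (r : ℂ)))ᴴ * (B.map (fun r : ℝ => (r : ℂ))) := by
    rw [hB]
    ext i j
    simp [Matrix.mul_apply, Matrix.star_eq_conjTranspose]
  rw [this]
  exact Matrix.posSemidef_conjTranspose_mul_self _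

lemma qf_psd {A : Matrix (Fin n) (Fin n) ℝ} (hA : A.PosSemidef) (x : Fin n → ℂ) :
    0 ≤ (qf (A.map (fun r : ℝ => (r : ℂ))) x).re ∧ (qf (A.map (fun r : ℝ => (r : ℂ))) x).im = 0 := by
  have h := (psd_map hA).dotProduct_mulVec_nonneg x
  rw [← qf, Complex.nonneg_iff] at h
  exact ⟨h.1, h.2.symm⟩

lemma pr_C {C : Matrix (Fin n) (Fin n) (RatFunc ℝ)} (hC : MemRHinf C)
    (hni : ∀ ω : ℝ, 0 < ω → ∀ x, (qf (evalM C (jw ω)) x).im ≤ 0)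
    (h0 : (0 - evalR C 0).PosSemidef) (s : ℂ) (hs : 0 < s.re) (x : Fin n → ℂ) :
    0 ≤ (-(qf (evalM C s) x) / s).re := by
  rw [memRHinf_iff] at hC
  have hq0 : qf (evalM C 0) x = -qf ((0 - evalR C 0).map (fun r : ℝ => (r : ℂ))) x := by
    simp only [qf_eq_sum, ← Finset.sum_neg_distrib]
    refine Finset.sum_congr rfl fun i _ => Finset.sum_congr rfl fun j _ => ?_
    have := evalC_ofReal (C i j) 0
    rw [Complex.ofReal_zero] at this
    simp [evalM, evalR, this]
  obtain ⟨hr, him⟩ := qf_psd h0 x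
  have hr' : (qf (evalM C 0) x).re ≤ 0 := by rw [hq0, Complex.neg_re]; linarith
  have him' : (qf (evalM C 0) x).im = 0 := by rw [hq0, Complex.neg_im, him, neg_zero]
  obtain ⟨K, hK⟩ := qf_bound (fun i j => evalC (C i j)) x
    (fun i j => (exists_bound (C i j) (hC i j)).imp fun K h s hs => (h s hs).1)
  have key := (pr_lemma (g := fun s => -qf (evalM C s) x) (K := K) ?_ ?_ ?_ s hs).1
  · have e : -(qf (evalM C s) x) / s = (-qf (evalM C s) x - -qf (evalM C 0) x) / s
        + -qf (evalM C 0) x / s := by ring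
    rw [e, Complex.add_re]
    have : 0 ≤ (-qf (evalM C 0) x / s).re := by
      rw [Complex.div_re, Complex.neg_re, Complex.neg_im, him']
      simp only [neg_zero, zero_mul, zero_div, add_zero]
      exact div_nonneg (mul_nonneg (by linarith) hs.le) (Complex.normSq_nonneg _)
    exact add_nonneg key this
  · intro s hs
    exact (qf_diff (fun i j => evalC (C i j)) x s fun i j => evalC_diff _ (hC i j) s hs).neg
  · intro s hs
    rw [norm_neg]
    exact hK s hs
  · intro ω hω
    have h1 := im_nonpos_all hni ω hω x
    generalize qf (evalM C (jw ω)) x = z at *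
    generalize qf (evalM C 0) x = z0 at *
    rw [Complex.div_re]
    simp only [jw, Complex.mul_re, Complex.mul_im, Complex.I_re, Complex.I_im, Complex.ofReal_re,
      Complex.ofReal_im, Complex.neg_im, Complex.sub_im, Complex.neg_re, Complex.sub_re, him']
    have h2 : 0 ≤ -(ω * z.im) := by linarith
    have h3 := div_nonneg h2 (Complex.normSq_nonneg (Complex.I * (ω : ℂ)))
    refine h3.trans_eq ?_
    simp only [sub_zero, zero_mul, one_mul, zero_add, mul_zero, zero_div, neg_zero, neg_mul]
    ring

lemma pr_P {P : Matrix (Fin n) (Fin n) (RatFunc ℝ)} (hP : MemRHinf P)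
    (hni : ∀ ω : ℝ, 0 < ω → ∀ x, x ≠ 0 → (qf (evalM P (jw ω)) x).im < 0)
    (h0 : (evalInf P).PosSemidef) (s : ℂ) (hs : 0 < s.re) (x : Fin n → ℂ) (hx : x ≠ 0) :
    0 < (s * qf (evalM P s) x).re := by
  rw [memRHinf_iff] at hP
  let D : ℂ → Matrix (Fin n) (Fin n) ℂ := fun w => Matrix.of fun i j => dualC (P i j) w
  have hD : ∀ w : ℂ, w ≠ 0 → D w = evalM P w⁻¹ := by
    intro w hw
    ext i j
    exact dualC_eq _ (hP i j).1 hw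
  have hq0 : D 0 = (evalInf P).map (fun r : ℝ => (r : ℂ)) := by
    ext i j
    exact dualC_zero _ (hP i j)
  obtain ⟨hr, him⟩ := qf_psd h0 x
  rw [← hq0] at hr him
  obtain ⟨K, hK⟩ := qf_bound (fun i j => dualC (P i j)) x
    (fun i j => (exists_bound (P i j) (hP i j)).imp fun K h s hs => (h s hs).2)
  have hs0 : s ≠ 0 := by rintro rfl; simp at hs
  have hsi : 0 < (s⁻¹).re := by
    rw [Complex.inv_re]
    exact div_pos hs (Complex.normSq_pos.mpr hs0)
  have haxis : ∀ ω : ℝ, ω ≠ 0 → 0 < ((qf (D (jw ω)) x - qf (D 0) x) / jw ω).re := by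
    intro ω hω
    have hj : jw ω ≠ 0 := by simp [jw, hω]
    have hjj : (jw ω)⁻¹ = jw (-ω⁻¹) := by
      simp [jw, mul_comm]
    rw [hD _ hj, div_eq_mul_inv, hjj]
    have h1 := im_neg_all hni (-ω⁻¹) (by simpa using hω) x hx
    generalize qf (evalM P (jw (-ω⁻¹))) x = z at *
    generalize qf (D 0) x = z0 at *
    generalize -ω⁻¹ = ν at *
    simp only [jw, Complex.mul_re, Complex.mul_im, Complex.I_re, Complex.I_im, Complex.ofReal_re,
      Complex.ofReal_im, Complex.sub_im, Complex.sub_re, him]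
    linarith
  have key := (pr_lemma (g := fun w => qf (D w) x) (K := K) ?_ ?_ (fun ω hω => (haxis ω hω).le)
    s⁻¹ hsi)
  · have hpos : 0 < ((qf (D s⁻¹) x - qf (D 0) x) / s⁻¹).re := by
      refine lt_of_le_of_ne key.1 fun h => ?_
      have := key.2 h.symm 1 one_ne_zero
      exact absurd this (haxis 1 one_ne_zero).ne'
    rw [hD _ (inv_ne_zero hs0), inv_inv, div_inv_eq_mul] at hpos
    have e : s * qf (evalM P s) x = (qf (evalM P s) x - qf (D 0) x) * s + qf (D 0) x * s := by ring
    rw [e, Complex.add_re]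
    refine add_pos_of_pos_of_nonneg hpos ?_
    rw [Complex.mul_re, him]
    simpa using mul_nonneg hr hs.le
  · intro s hs
    exact qf_diff (fun i j => dualC (P i j)) x s fun i j => dualC_diff _ (hP i j) s hs
  · intro s hs
    exact hK s hs

/-- A singular loop gives a pair `x = P y`, `y = C x`. -/
lemma exists_pair {𝕜 : Type*} [Field 𝕜] {P C : Matrix (Fin n) (Fin n) 𝕜}
    (h : (1 - P * C).det = 0) : ∃ x y : Fin n → 𝕜, y ≠ 0 ∧ y = C *ᵥ x ∧ x = P *ᵥ y := by
  obtain ⟨x, hx, hx'⟩ := Matrix.exists_mulVec_eq_zero_iff.mpr h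
  rw [sub_mulVec, one_mulVec, sub_eq_zero, ← mulVec_mulVec] at hx'
  refine ⟨x, C *ᵥ x, fun h0 => hx ?_, rfl, hx'⟩
  rw [hx', h0, mulVec_zero]

theorem sufficiency {P C : Matrix (Fin n) (Fin n) (RatFunc ℝ)} (hC : MemRHinf C)
    (hP : IsSNI P) (hPi : (evalInf P).PosSemidef)
    (hni : ∀ ω : ℝ, 0 < ω → ∀ x, (qf (evalM C (jw ω)) x).im ≤ 0)
    (h0 : (0 - evalR C 0).PosSemidef) : FeedbackStable P C := by
  have hPn : ∀ ω : ℝ, 0 < ω → ∀ x, x ≠ 0 → (qf (evalM P (jw ω)) x).im < 0 :=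
    fun ω hω => (niKer_pd_iff _).mp (hP.2 ω hω)
  have hCr := (memRHinf_iff _).mp hC
  have hPr := (memRHinf_iff _).mp hP.1
  have hrC := pr_C hC hni h0
  have hrP := pr_P hP.1 hPn hPi
  refine feedbackStable_of hP.1 hC ?_ ?_
  · intro s hs hdet
    obtain ⟨x, y, hy, hyx, hxy⟩ := exists_pair hdet
    have hqC : qf (evalM C s) x = star x ⬝ᵥ y := by rw [qf, ← hyx]
    have hqP : qf (evalM P s) y = star (star x ⬝ᵥ y) := by
      rw [qf, ← hxy, Matrix.star_dotProduct, dotProduct_comm]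
    rcases hs.lt_or_eq with hs | hs
    · have h1 := hrC s hs x
      have h2 := hrP s hs y hy
      rw [hqC] at h1
      rw [hqP] at h2
      generalize star x ⬝ᵥ y = z at *
      rw [Complex.div_re, ← add_div] at h1
      have hs0 : s ≠ 0 := by rintro rfl; simp at hs
      have hns := Complex.normSq_pos.mpr hs0
      rw [le_div_iff₀ hns] at h1
      simp only [Complex.mul_re, Complex.star_def, Complex.conj_re, Complex.conj_im,
        Complex.neg_re, Complex.neg_im] at h1 h2
      linarith
    · obtain ⟨ω, rfl⟩ : ∃ ω : ℝ, s = jw ω := ⟨s.im, by apply Complex.ext <;> simp [jw, ← hs]⟩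
      by_cases hω : ω = 0
      · subst hω
        have hj : jw 0 = 0 := by simp [jw]
        rw [hj] at hqC hqP hyx
        -- the value of the form of P at zero
        have h2 : 0 ≤ (qf (evalM P 0) y).re := by
          have hc : ContinuousAt (fun s => qf (evalM P s) y) ((0 : ℝ) : ℂ) :=
            (qf_diff (fun i j => evalC (P i j)) y _
              fun i j => evalC_diff _ (hPr i j) _ (by simp)).continuousAt
          have ht : Tendsto (fun t : ℝ => (qf (evalM P (t : ℂ)) y).re) (𝓝[>] 0)
              (𝓝 (qf (evalM P ((0 : ℝ) : ℂ)) y).re) :=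
            ((Complex.continuous_re.tendsto _).comp (hc.tendsto.comp
              (Complex.continuous_ofReal.tendsto 0))).mono_left nhdsWithin_le_nhds
          rw [Complex.ofReal_zero] at ht
          refine ge_of_tendsto ht ?_
          filter_upwards [self_mem_nhdsWithin] with t ht
          have ht' : (0:ℝ) < t := ht
          have h3 := hrP t (by simpa using ht') y hy
          rw [Complex.re_ofReal_mul] at h3
          exact (pos_of_mul_pos_right h3 ht'.le).le
        have hmap : evalM C 0 = -((0 - evalR C 0).map (fun r : ℝ => (r : ℂ))) := by
          ext i j
          have := evalC_ofReal (C i j) 0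
          rw [Complex.ofReal_zero] at this
          simp [evalM, evalR, this]
        have hneg : qf (evalM C 0) x = - qf ((0 - evalR C 0).map (fun r : ℝ => (r : ℂ))) x := by
          rw [hmap, qf, qf, neg_mulVec, dotProduct_neg]
        obtain ⟨h3, h4⟩ := qf_psd h0 x
        have hre : (qf (evalM C 0) x).re = (qf (evalM P 0) y).re := by
          rw [hqC, hqP]; simp
        have hz : qf ((0 - evalR C 0).map (fun r : ℝ => (r : ℂ))) x = 0 := by
          apply Complex.ext
          · rw [hneg, Complex.neg_re] at hre
            rw [Complex.zero_re]
            linarith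
          · exact h4
        have := ((psd_map h0).dotProduct_mulVec_zero_iff x).mp hz
        apply hy
        rw [hyx, hmap, neg_mulVec, this, neg_zero]
      · have h1 := im_nonpos_all hni ω hω x
        have h2 := im_neg_all hPn ω hω y hy
        rw [hqC] at h1
        rw [hqP, Complex.star_def, Complex.conj_im] at h2
        linarith
  · intro hdet
    obtain ⟨x, y, hy, hyx, hxy⟩ := exists_pair hdet
    have h1 : x ⬝ᵥ evalInf C *ᵥ x ≤ 0 := by
      have ht : Tendsto (fun t : ℝ => x ⬝ᵥ evalR C t *ᵥ x) atTop (𝓝 (x ⬝ᵥ evalInf C *ᵥ x)) := by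
        simp only [dotProduct, mulVec, evalR, evalInf, of_apply]
        refine tendsto_finsetSum _ fun i _ => Tendsto.const_mul _ ?_
        exact tendsto_finsetSum _ fun j _ => (atInf_tendsto (hCr i j).1).mul_const _
      refine le_of_tendsto ht ?_
      filter_upwards [eventually_gt_atTop 0] with t ht
      have h3 := hrC t (by simpa using ht) (fun i => (x i : ℂ))
      have h4 : qf (evalM C t) (fun i => (x i : ℂ)) = ((x ⬝ᵥ evalR C t *ᵥ x : ℝ) : ℂ) := by
        simp [qf_eq_sum, dotProduct, mulVec, evalM, evalR, evalC_ofReal, Finset.mul_sum]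
      rw [h4, ← Complex.ofReal_neg, ← Complex.ofReal_div, Complex.ofReal_re, le_div_iff₀ ht] at h3
      linarith
    have h2 := hPi.dotProduct_mulVec_nonneg y
    rw [← hyx] at h1
    have h3 : star y ⬝ᵥ evalInf P *ᵥ y = 0 := by
      apply le_antisymm _ h2
      rw [← hxy, star_trivial, dotProduct_comm]
      exact h1
    have h4 := (hPi.dotProduct_mulVec_zero_iff y).mp h3
    apply hy
    rw [hyx, hxy, h4, mulVec_zero]

/-! ### Necessity: construction of destabilising uncertainties -/

lemma exists_frac (p q : ℝ[X]) (hq : ∀ s : ℂ, 0 ≤ s.re → q.eval₂ (algebraMap ℝ ℂ) s ≠ 0)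
    (hdeg : p.natDegree < q.natDegree) :
    ∃ f : RH, (∀ s hs, evH s hs f = p.eval₂ (algebraMap ℝ ℂ) s / q.eval₂ (algebraMap ℝ ℂ) s) ∧
      infH f = 0 := by
  have hq0 : q ≠ 0 := by rintro rfl; simp at hdeg
  set f : RatFunc ℝ := algebraMap ℝ[X] (RatFunc ℝ) p / algebraMap ℝ[X] (RatFunc ℝ) q with hf
  have hqf : algebraMap ℝ[X] (RatFunc ℝ) q ≠ 0 := by simpa using hq0
  have hgood : Good f := by
    refine ⟨?_, fun s hs => eval₂_ne_of_dvd (RatFunc.denom_div_dvd p q) (hq s hs)⟩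
    by_cases hp : p = 0
    · simp [hf, hp]
    rw [hf, RatFunc.intDegree_div (by simpa using hp) hqf, RatFunc.intDegree_polynomial,
      RatFunc.intDegree_polynomial]
    omega
  have hev : ∀ s hs, evH s hs ⟨f, hgood⟩
      = p.eval₂ (algebraMap ℝ ℂ) s / q.eval₂ (algebraMap ℝ ℂ) s := by
    intro s hs
    rw [eq_div_iff (hq s hs)]
    have h1 := RatFunc.eval_mul (algebraMap ℝ ℂ) s (x := f) (y := algebraMap ℝ[X] (RatFunc ℝ) q)
      (hgood.2 s hs) (by simp)
    rw [hf, div_mul_cancel₀ _ hqf, RatFunc.eval_algebraMap, RatFunc.eval_algebraMap] at h1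
    exact h1.symm
  refine ⟨⟨f, hgood⟩, hev, ?_⟩
  refine tendsto_nhds_unique (atInf_tendsto hgood.1) ?_
  refine (Polynomial.div_tendsto_atTop_zero_of_degree_lt p q
    (Polynomial.degree_lt_degree hdeg)).congr' ?_
  filter_upwards [eventually_ge_atTop 0] with x hx
  have h1 := hev (x : ℂ) (by simpa using hx)
  have h2 : ∀ r : ℝ[X], r.eval₂ (algebraMap ℝ ℂ) (x : ℂ) = ((r.eval x : ℝ) : ℂ) := by
    intro r
    have := Polynomial.hom_eval₂ r (RingHom.id ℝ) (algebraMap ℝ ℂ) x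
    simpa using this.symm
  have h3 : evalC f (x : ℂ) = _ := h1
  rw [evalC_ofReal, h2, h2] at h3
  exact_mod_cast h3.symm

/-- Real constants in `RH`. -/
def kon : ℝ →+* RH := (RatFunc.C : ℝ →+* RatFunc ℝ).codRestrict RH good_C

lemma evH_kon (s : ℂ) (hs : 0 ≤ s.re) (r : ℝ) : evH s hs (kon r) = (r : ℂ) := by
  show evalC (RatFunc.C r) s = _
  simp [evalC]

lemma infH_kon (r : ℝ) : infH (kon r) = r := by
  refine tendsto_nhds_unique (atInf_tendsto (kon r).2.1) ?_
  refine tendsto_const_nhds.congr fun x => ?_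
  show _ = RatFunc.eval (RingHom.id ℝ) x (RatFunc.C r)
  simp

lemma quad_ne {c d : ℝ} (hc : 0 < c) (hd : 0 < d) (s : ℂ) (hs : 0 ≤ s.re) :
    s ^ 2 + c * s + d ≠ 0 := by
  intro h
  have h1 := congrArg Complex.re h
  have h2 := congrArg Complex.im h
  simp [pow_two] at h1 h2
  have h3 : s.im * (2 * s.re + c) = 0 := by linarith
  rcases mul_eq_zero.mp h3 with h4 | h4
  · rw [h4] at h1
    nlinarith [mul_nonneg hc.le hs, mul_nonneg hs hs]
  · linarith

lemma qf_rank_one (φ e : ℂ) (u x : Fin n → ℂ) :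
    qf (φ • vecMulVec u (star u) + e • (1 : Matrix (Fin n) (Fin n) ℂ)) x
      = φ * ((Complex.normSq (star u ⬝ᵥ x) : ℝ) : ℂ)
        + e * ((∑ i, Complex.normSq (x i) : ℝ) : ℂ) := by
  have h1 : star x ⬝ᵥ u = star (star u ⬝ᵥ x) := by
    rw [Matrix.star_dotProduct, dotProduct_comm]
  have h2 : star x ⬝ᵥ x = ((∑ i, Complex.normSq (x i) : ℝ) : ℂ) := by
    simp only [dotProduct, Complex.ofReal_sum, Pi.star_apply, Complex.star_def]
    exact Finset.sum_congr rfl fun i _ => (Complex.normSq_eq_conj_mul_self).symm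
  rw [qf, add_mulVec, smul_mulVec, smul_mulVec, one_mulVec, vecMulVec_mulVec, dotProduct_add,
    dotProduct_smul, dotProduct_smul, dotProduct_smul, h2, Complex.normSq_eq_conj_mul_self]
  simp only [op_smul_eq_smul, dotProduct_smul, smul_eq_mul, h1, Complex.star_def]
  ring

lemma construct {c d k δ : ℝ} (hc : 0 < c) (hd : 0 < d) (hk : 0 < k) (hδ : 0 < δ)
    (a b : Fin n → ℝ) (hb : k * ∑ i, b i ^ 2 ≤ δ) :
    ∃ P : Matrix (Fin n) (Fin n) (RatFunc ℝ), IsSNI P ∧ (evalInf P).PosSemidef ∧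
      ∀ ω : ℝ, evalM P (jw ω) =
        (k / ((jw ω) ^ 2 + c * jw ω + d) : ℂ) • vecMulVec (fun i => (a i + jw ω * b i : ℂ))
          (star (fun i => (a i + jw ω * b i : ℂ))) +
        (δ * (1 + 1 / (jw ω + 1)) : ℂ) • (1 : Matrix (Fin n) (Fin n) ℂ) := by
  have hqne : ∀ s : ℂ, 0 ≤ s.re →
      (X ^ 2 + C c * X + C d : ℝ[X]).eval₂ (algebraMap ℝ ℂ) s ≠ 0 := by
    intro s hs
    simpa [Polynomial.eval₂_add, Polynomial.eval₂_mul] using quad_ne hc hd s hs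
  have hqdeg : (X ^ 2 + C c * X + C d : ℝ[X]).natDegree = 2 := by compute_degree!
  have hs1 : ∀ s : ℂ, 0 ≤ s.re → s + 1 ≠ 0 := by
    intro s hs h
    have := congrArg Complex.re h
    simp at this
    linarith
  obtain ⟨g, hg, hgi⟩ := exists_frac 1 (X ^ 2 + C c * X + C d : ℝ[X]) hqne (by rw [hqdeg]; simp)
  obtain ⟨g1, hg1, hg1i⟩ := exists_frac X (X ^ 2 + C c * X + C d : ℝ[X]) hqne (by rw [hqdeg]; simp)
  obtain ⟨h, hh, hhi⟩ := exists_frac 1 (X + C 1 : ℝ[X])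
    (by intro s hs; simpa using hs1 s hs) (by rw [Polynomial.natDegree_X_add_C]; simp)
  simp only [Polynomial.eval₂_add, Polynomial.eval₂_mul, Polynomial.eval₂_pow, Polynomial.eval₂_X,
    Polynomial.eval₂_C, Polynomial.eval₂_one, Complex.coe_algebraMap, Complex.ofReal_one]
    at hg hg1 hh
  let P' : Matrix (Fin n) (Fin n) RH := Matrix.of fun i j =>
    kon (k * a i * a j) * g + kon (k * (b i * a j - a i * b j)) * g1
      - kon (k * b i * b j) * (1 - kon c * g1 - kon d * g)
      + (if i = j then kon δ * (1 + h) else 0)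
  have hev : ∀ ω : ℝ, evalM (RH.subtype.mapMatrix P') (jw ω) =
        (k / ((jw ω) ^ 2 + c * jw ω + d) : ℂ) • vecMulVec (fun i => (a i + jw ω * b i : ℂ))
          (star (fun i => (a i + jw ω * b i : ℂ))) +
        (δ * (1 + 1 / (jw ω + 1)) : ℂ) • (1 : Matrix (Fin n) (Fin n) ℂ) := by
    intro ω
    have hre : 0 ≤ (jw ω).re := (jw_re ω).ge
    rw [evalM_map _ _ hre]
    ext i j
    have hstar : star (jw ω) = - jw ω := by
      have := jw_neg ω
      rw [Complex.star_def, ← this]; simp [jw]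
    have hne := quad_ne hc hd _ hre
    simp only [RingHom.mapMatrix_apply, Matrix.map_apply, P', of_apply, map_add, map_sub, map_mul,
      map_one, evH_kon, hg, hg1, Matrix.add_apply, Matrix.smul_apply, vecMulVec_apply,
      Pi.star_apply, star_add, star_mul', hstar, smul_eq_mul, Matrix.one_apply]
    have e1 : ((starRingEnd ℂ) (a j : ℂ)) = a j := Complex.conj_ofReal _
    have e2 : ((starRingEnd ℂ) (b j : ℂ)) = b j := Complex.conj_ofReal _
    simp only [Complex.star_def, e1, e2]
    congr 1
    · push_cast
      generalize jw ω = s at *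
      rw [eq_comm, ← sub_eq_zero]
      have e3 : (1 : ℂ) = (s ^ 2 + c * s + d) * (1 / (s ^ 2 + c * s + d)) := by
        rw [mul_one_div, div_self hne]
      rw [div_eq_mul_one_div (k : ℂ), div_eq_mul_one_div s]
      generalize 1 / (s ^ 2 + c * s + d) = r at *
      linear_combination ((k : ℂ) * b i * b j) * e3
    · split_ifs with hij
      · simp [evH_kon, hh]
      · simp
  refine ⟨RH.subtype.mapMatrix P', ⟨memRHinf_map _, fun ω hω => ?_⟩, ?_, hev⟩
  · rw [niKer_pd_iff]
    intro x hx
    rw [hev, qf_rank_one, Complex.add_im, Complex.im_mul_ofReal, Complex.im_mul_ofReal]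
    have h1 : (k / ((jw ω) ^ 2 + c * jw ω + d) : ℂ).im ≤ 0 := by
      rw [Complex.div_im]
      have e1 : ((jw ω) ^ 2 + c * jw ω + d : ℂ).im = c * ω := by simp [jw, pow_two]
      rw [e1, Complex.ofReal_im, Complex.ofReal_re, zero_mul, zero_div, zero_sub, neg_nonpos]
      exact div_nonneg (by positivity) (Complex.normSq_nonneg _)
    have h2 : (δ * (1 + 1 / (jw ω + 1)) : ℂ).im < 0 := by
      rw [Complex.im_ofReal_mul, Complex.add_im, Complex.div_im]
      have e1 : (jw ω + 1 : ℂ).im = ω := by simp [jw]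
      have e2 := div_pos hω (Complex.normSq_pos.mpr (hs1 (jw ω) (jw_re ω).ge))
      rw [e1, Complex.one_im, Complex.one_re, zero_mul, zero_div, zero_sub, one_mul, zero_add]
      nlinarith [mul_pos hδ e2]
    have h3 : 0 < ∑ i, Complex.normSq (x i) := by
      obtain ⟨i, hi⟩ := Function.ne_iff.mp hx
      exact Finset.sum_pos' (fun i _ => Complex.normSq_nonneg _)
        ⟨i, Finset.mem_univ i, Complex.normSq_pos.mpr hi⟩
    have h4 := mul_nonneg (neg_nonneg.mpr h1) (Complex.normSq_nonneg (star (fun i => (a i + jw ω * b i : ℂ)) ⬝ᵥ x))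
    nlinarith [mul_pos (neg_pos.mpr h2) h3]
  · have hinf : evalInf (RH.subtype.mapMatrix P')
        = δ • (1 : Matrix (Fin n) (Fin n) ℝ) - k • vecMulVec b b := by
      rw [evalInf_map]
      ext i j
      simp only [RingHom.mapMatrix_apply, Matrix.map_apply, P', of_apply, map_add, map_sub, map_mul,
        map_one, infH_kon, hgi, hg1i, Matrix.sub_apply, Matrix.smul_apply, vecMulVec_apply,
        smul_eq_mul, Matrix.one_apply]
      split_ifs with hij
      · simp [infH_kon, hhi]; ring
      · simp; ring
    rw [hinf]
    refine PosSemidef.of_dotProduct_mulVec_nonneg ?_ fun x => ?_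
    · ext i j
      simp [vecMulVec_apply, Matrix.one_apply, eq_comm, mul_comm]
    · have hcs := Finset.sum_mul_sq_le_sq_mul_sq Finset.univ b x
      have e : star x ⬝ᵥ (δ • (1 : Matrix (Fin n) (Fin n) ℝ) - k • vecMulVec b b) *ᵥ x
          = δ * ∑ i, x i ^ 2 - k * (∑ i, b i * x i) ^ 2 := by
        rw [sub_mulVec, smul_mulVec, smul_mulVec, one_mulVec, vecMulVec_mulVec, dotProduct_sub,
          dotProduct_smul, dotProduct_smul, star_trivial]
        simp only [op_smul_eq_smul, dotProduct_smul, smul_eq_mul]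
        rw [dotProduct_comm x b]
        simp only [dotProduct, pow_two]
      rw [e]
      have hx2 : 0 ≤ ∑ i, x i ^ 2 := Finset.sum_nonneg fun i _ => sq_nonneg _
      nlinarith [mul_le_mul_of_nonneg_left hcs hk.le, mul_le_mul_of_nonneg_right hb hx2]

lemma rank_one_mulVec (φ e : ℂ) (u y : Fin n → ℂ) :
    (φ • vecMulVec u (star u) + e • (1 : Matrix (Fin n) (Fin n) ℂ)) *ᵥ y
      = (φ * (star u ⬝ᵥ y)) • u + e • y := by
  rw [add_mulVec, smul_mulVec, smul_mulVec, one_mulVec, vecMulVec_mulVec, op_smul_eq_smul,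
    smul_smul]

lemma interp {ω : ℝ} (hω : 0 < ω) (x y : Fin n → ℂ) (h : 0 < (star x ⬝ᵥ y).im) :
    ∃ P : Matrix (Fin n) (Fin n) (RatFunc ℝ), IsSNI P ∧ (evalInf P).PosSemidef ∧
      evalM P (jw ω) *ᵥ y = x := by
  set e : ℂ := 1 + 1 / (jw ω + 1) with he
  obtain ⟨δ, hδ, hδ'⟩ : ∃ δ : ℝ, 0 < δ ∧ 0 < (star (x - ((δ : ℂ) * e) • y) ⬝ᵥ y).im := by
    have hc : Continuous (fun δ : ℝ => (star (x - ((δ : ℂ) * e) • y) ⬝ᵥ y).im) := by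
      simp only [dotProduct, Pi.star_apply, Pi.sub_apply, Pi.smul_apply, smul_eq_mul]
      fun_prop
    have h0 : ∀ᶠ δ : ℝ in 𝓝 0, 0 < (star (x - ((δ : ℂ) * e) • y) ⬝ᵥ y).im := by
      apply hc.continuousAt.eventually_const_lt
      simpa using h
    have h1 : ∀ᶠ δ : ℝ in 𝓝[>] 0, 0 < δ ∧ 0 < (star (x - ((δ : ℂ) * e) • y) ⬝ᵥ y).im :=
      (eventually_mem_nhdsWithin).and (h0.filter_mono nhdsWithin_le_nhds)
    exact h1.exists
  set x' := x - ((δ : ℂ) * e) • y with hx'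
  set z := star x' ⬝ᵥ y with hz
  let a : Fin n → ℝ := fun i => (x' i).re
  let b : Fin n → ℝ := fun i => (x' i).im / ω
  have hb0 : 0 ≤ ∑ i, b i ^ 2 := Finset.sum_nonneg fun i _ => sq_nonneg _
  obtain ⟨k, hk, hk1, hk2⟩ : ∃ k : ℝ, 0 < k ∧ k * |z.re| < ω ^ 2 ∧ k * ∑ i, b i ^ 2 ≤ δ := by
    refine ⟨min (ω ^ 2 / (|z.re| + 1)) (δ / (∑ i, b i ^ 2 + 1)), ?_, ?_, ?_⟩
    · positivity
    · have hp : 0 < |z.re| + 1 := by positivity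
      have hw : 0 < ω ^ 2 / (|z.re| + 1) := by positivity
      have e1 : ω ^ 2 / (|z.re| + 1) * (|z.re| + 1) = ω ^ 2 := div_mul_cancel₀ _ hp.ne'
      have := mul_le_mul_of_nonneg_right
        (min_le_left (ω ^ 2 / (|z.re| + 1)) (δ / (∑ i, b i ^ 2 + 1))) (abs_nonneg z.re)
      linarith
    · have hp : 0 < ∑ i, b i ^ 2 + 1 := by positivity
      have hw : 0 < δ / (∑ i, b i ^ 2 + 1) := by positivity
      have e1 : δ / (∑ i, b i ^ 2 + 1) * (∑ i, b i ^ 2 + 1) = δ := div_mul_cancel₀ _ hp.ne'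
      have := mul_le_mul_of_nonneg_right
        (min_le_right (ω ^ 2 / (|z.re| + 1)) (δ / (∑ i, b i ^ 2 + 1))) hb0
      linarith
  have hd : 0 < ω ^ 2 + k * z.re := by
    have := mul_le_mul_of_nonneg_left (neg_abs_le z.re) hk.le
    linarith
  have hc : 0 < k * z.im / ω := by positivity
  obtain ⟨P, hP, hPi, hev⟩ := construct hc hd hk hδ a b hk2
  refine ⟨P, hP, hPi, ?_⟩
  have hu : (fun i => (a i + jw ω * b i : ℂ)) = x' := by
    funext i
    apply Complex.ext
    · simp [a, b, jw]
    · simp [a, b, jw]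
      field_simp
  have hz0 : z ≠ 0 := by
    intro h0
    rw [h0] at hδ'
    simp at hδ'
  have hden : ((jw ω) ^ 2 + ((k * z.im / ω : ℝ) : ℂ) * jw ω + ((ω ^ 2 + k * z.re : ℝ) : ℂ))
      = k * z := by
    apply Complex.ext
    · simp [jw, pow_two]
    · simp [jw, pow_two]
      field_simp
  rw [hev, hu, hden, rank_one_mulVec, ← hz, ← he]
  have hk0 : (k : ℂ) ≠ 0 := by exact_mod_cast hk.ne'
  have h1 : (k : ℂ) / (k * z) * z = 1 := by field_simp
  rw [h1, one_smul, hx', sub_add_cancel]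

lemma interp_zero (x y : Fin n → ℝ) (h : 0 < x ⬝ᵥ y) :
    ∃ P : Matrix (Fin n) (Fin n) (RatFunc ℝ), IsSNI P ∧ (evalInf P).PosSemidef ∧
      evalM P (jw 0) *ᵥ (fun i => (y i : ℂ)) = fun i => (x i : ℂ) := by
  obtain ⟨δ, hδ, hδ'⟩ : ∃ δ : ℝ, 0 < δ ∧ 0 < (x - (δ * 2) • y) ⬝ᵥ y := by
    have hc : Continuous (fun δ : ℝ => (x - (δ * 2) • y) ⬝ᵥ y) := by
      simp only [dotProduct, Pi.sub_apply, Pi.smul_apply, smul_eq_mul]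
      fun_prop
    have h0 : ∀ᶠ δ : ℝ in 𝓝 0, 0 < (x - (δ * 2) • y) ⬝ᵥ y := by
      apply hc.continuousAt.eventually_const_lt
      simpa using h
    have h1 : ∀ᶠ δ : ℝ in 𝓝[>] 0, 0 < δ ∧ 0 < (x - (δ * 2) • y) ⬝ᵥ y :=
      (eventually_mem_nhdsWithin).and (h0.filter_mono nhdsWithin_le_nhds)
    exact h1.exists
  set x' := x - (δ * 2) • y with hx'
  obtain ⟨P, hP, hPi, hev⟩ := construct one_pos one_pos (inv_pos.mpr hδ') hδ x' 0
    (by simpa using hδ.le)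
  refine ⟨P, hP, hPi, ?_⟩
  have hj : jw 0 = 0 := by simp [jw]
  have hdot : star (fun i => ((x' i : ℝ) : ℂ)) ⬝ᵥ (fun i => (y i : ℂ)) = ((x' ⬝ᵥ y : ℝ) : ℂ) := by
    simp [dotProduct]
  have hu : (fun i => ((x' i : ℂ) + (0 : ℂ) * (((0 : Fin n → ℝ) i : ℝ) : ℂ))) = fun i => (x' i : ℂ) := by
    funext i; simp
  rw [hev, hj, hu, rank_one_mulVec, hdot]
  have hz0 : ((x' ⬝ᵥ y : ℝ) : ℂ) ≠ 0 := by exact_mod_cast hδ'.ne'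
  funext i
  have h1 : (((x' ⬝ᵥ y)⁻¹ : ℝ) : ℂ) / ((0 : ℂ) ^ 2 + ((1 : ℝ) : ℂ) * 0 + ((1 : ℝ) : ℂ))
      * ((x' ⬝ᵥ y : ℝ) : ℂ) = 1 := by
    push_cast
    field_simp
    simp
  rw [h1]
  have h2 : x' i = x i - δ * 2 * y i := by simp [hx']
  simp only [Pi.add_apply, Pi.smul_apply, smul_eq_mul, h2]
  push_cast
  norm_num

lemma not_stable {P C : Matrix (Fin n) (Fin n) (RatFunc ℝ)} (hP : MemRHinf P) (hC : MemRHinf C)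
    (hs : FeedbackStable P C) (ω : ℝ) (x : Fin n → ℂ)
    (h : evalM P (jw ω) *ᵥ (evalM C (jw ω) *ᵥ x) = x) : x = 0 := by
  by_contra hx
  refine det_ne_of_stable hP hC hs (jw ω) (jw_re ω).ge ?_
  refine Matrix.exists_mulVec_eq_zero_iff.mp ⟨x, hx, ?_⟩
  rw [sub_mulVec, one_mulVec, ← mulVec_mulVec, h, sub_self]

lemma symm_of_im_zero {A : Matrix (Fin n) (Fin n) ℝ}
    (h : ∀ x, (qf (A.map (fun r : ℝ => (r : ℂ))) x).im = 0) : A.IsHermitian := by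
  ext i j
  rw [conjTranspose_apply, star_trivial]
  have hv : ∀ v : Fin n → ℂ, (qf (A.map (fun r : ℝ => (r : ℂ))) v).im
      = ∑ i, ∑ j, A i j * ((v i).re * (v j).im - (v i).im * (v j).re) := by
    intro v
    rw [qf_eq_sum, Complex.im_sum]
    refine Finset.sum_congr rfl fun i _ => ?_
    rw [Complex.im_sum]
    refine Finset.sum_congr rfl fun j _ => ?_
    simp
    ring
  have h1 := h (fun m => ⟨if m = i then 1 else 0, if m = j then 1 else 0⟩)
  rw [hv] at h1
  simp only [mul_sub, Finset.sum_sub_distrib] at h1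
  have e1 : ∀ p q : Fin n, ∑ i', ∑ j', A i' j' * ((if i' = p then (1:ℝ) else 0) * (if j' = q then 1 else 0))
      = A p q := by
    intro p q
    simp
  rw [e1, e1] at h1
  linarith

theorem necessity {C : Matrix (Fin n) (Fin n) (RatFunc ℝ)} (hC : MemRHinf C)
    (H : ∀ P : Matrix (Fin n) (Fin n) (RatFunc ℝ), IsSNI P → (evalInf P).PosSemidef →
      FeedbackStable P C) :
    (∀ ω : ℝ, 0 < ω → ∀ x, (qf (evalM C (jw ω)) x).im ≤ 0) ∧ (0 - evalR C 0).PosSemidef := by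
  have hni : ∀ ω : ℝ, 0 < ω → ∀ x, (qf (evalM C (jw ω)) x).im ≤ 0 := by
    intro ω hω x
    by_contra! hx
    obtain ⟨P, hP, hPi, hPx⟩ := interp hω x (evalM C (jw ω) *ᵥ x) hx
    have := not_stable hP.1 hC (H P hP hPi) ω x hPx
    rw [this] at hx
    simp [qf] at hx
  refine ⟨hni, ?_⟩
  have hCr := (memRHinf_iff _).mp hC
  have hmap : evalM C 0 = (evalR C 0).map (fun r : ℝ => (r : ℂ)) := by
    ext i j
    have := evalC_ofReal (C i j) 0
    rw [Complex.ofReal_zero] at this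
    simp [evalM, evalR, this]
  have hj : jw 0 = 0 := by simp [jw]
  have hle : ∀ x, (qf (evalM C 0) x).im ≤ 0 := by
    intro x
    have hc : ContinuousAt (fun s => qf (evalM C s) x) (jw 0) :=
      (qf_diff (fun i j => evalC (C i j)) x _
        fun i j => evalC_diff _ (hCr i j) _ (jw_re 0).ge).continuousAt
    have hcj : Continuous jw := by unfold jw; fun_prop
    have ht : Tendsto (fun t : ℝ => (qf (evalM C (jw t)) x).im) (𝓝[>] 0)
        (𝓝 (qf (evalM C (jw 0)) x).im) :=
      ((Complex.continuous_im.tendsto _).comp (hc.tendsto.comp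
        (hcj.tendsto 0))).mono_left nhdsWithin_le_nhds
    rw [hj] at ht
    refine le_of_tendsto ht ?_
    filter_upwards [self_mem_nhdsWithin] with t ht
    exact hni t ht x
  have hherm : (evalR C 0).IsHermitian := by
    apply symm_of_im_zero
    intro x
    rw [← hmap]
    have h1 := qf_conj C 0 x
    rw [map_zero] at h1
    have h2 := hle (star x)
    have h3 := congrArg Complex.im h1
    rw [Complex.star_def, Complex.conj_im] at h3
    linarith [hle x]
  refine PosSemidef.of_dotProduct_mulVec_nonneg ?_ fun x => ?_
  · rw [zero_sub]; exact hherm.neg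
  · rw [zero_sub, neg_mulVec, dotProduct_neg, star_trivial]
    by_contra! hx
    have hx' : 0 < x ⬝ᵥ evalR C 0 *ᵥ x := by linarith
    obtain ⟨P, hP, hPi, hPx⟩ := interp_zero x (evalR C 0 *ᵥ x) hx'
    have hy : (fun i => (((evalR C 0 *ᵥ x) i : ℝ) : ℂ)) = evalM C (jw 0) *ᵥ fun i => (x i : ℂ) := by
      rw [hj, hmap]
      funext i
      simp [mulVec, dotProduct]
    rw [hy] at hPx
    have h0 := not_stable hP.1 hC (H P hP hPi) 0 _ hPx
    have hx0 : x = 0 := by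
      funext i
      have := congrFun h0 i
      simpa using this
    rw [hx0] at hx'
    simp at hx'

/-- converse theorem for stable SNI uncertainty with nonnegative
instantaneous gain. -/
theorem converse_stable_SNI {n : ℕ} (C : Matrix (Fin n) (Fin n) (RatFunc ℝ)) (hC : MemRHinf C) :
    (∀ P : Matrix (Fin n) (Fin n) (RatFunc ℝ), IsSNI P → (evalInf P).PosSemidef → FeedbackStable P C) ↔
      (IsNI C ∧ LoewnerLE (evalR C 0) 0) := by
  rw [LoewnerLE]
  constructor
  · intro H
    obtain ⟨h1, h2⟩ := necessity hC H
    have hpole : ∀ s : ℂ, 0 ≤ s.re → ¬ HasPole C s := by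
      rintro s hs ⟨i, j, hij⟩
      exact hC.2 s hs i j hij
    refine ⟨⟨hC.1, fun s hs => hpole s hs.le, fun ω hω _ => (niKer_psd_iff _).mpr (h1 ω hω),
      fun ω _ hp => absurd hp (hpole _ (jw_re ω).ge), fun hp => absurd hp (hpole 0 (by simp))⟩, h2⟩
  · rintro ⟨hNI, h0⟩ P hP hPi
    refine sufficiency hC hP hPi (fun ω hω => (niKer_psd_iff _).mp (hNI.2.2.1 ω hω ?_)) h0
    rintro ⟨i, j, hij⟩
    exact hC.2 _ (jw_re ω).ge i j hij

end NIControl
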